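/- Let A and U be nonempty sets with the discrete topology, let X ⊆ A^ℤ be a shift space, and let Ψ : X → U^ℤ be a continuous map satisfying Ψ ∘ σ = σ ∘ Ψ. Then there exist a barrier B on X and a function φ : B → U such that Ψ(x)_n = φ(B_n(x)) for every x ∈ X and every n ∈ ℤ, where B_n(x) is the member of B containing σ^n(x); that is, every continuous shift-commuting map between shift spaces over discrete alphabets is an extended sliding block code. -/

import Mathlib

open Filter Topology Set

namespace ShiftPaper

/-- The shift map `σ` on the full shift `A^ℤ`: `σ(x)_n = x_{n+1}`. -/
def shiftMap {A : Type*} (x : ℤ → A) : ℤ → A := fun n => x (n + 1)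

/-- The `n`-th iterate of the shift: `σ^n(x)_m = x_{m+n}` (for `n : ℤ`). -/
def shiftIter {A : Type*} (n : ℤ) (x : ℤ → A) : ℤ → A := fun m => x (m + n)

/-- A shift space: a nonempty closed shift-invariant subset of the full shift. -/
def IsShiftSpace {A : Type*} [TopologicalSpace A] (X : Set (ℤ → A)) : Prop :=
  X.Nonempty ∧ IsClosed X ∧ shiftMap '' X = X

/-- The cylinder in `X` determined by the finite set `s ⊆ ℤ` and the values of `h` on `s`:
`C_X(h) = X ∩ {x : x_i = h_i for all i ∈ s}`. -/
def cylX {A : Type*} (X : Set (ℤ → A)) (s : Finset ℤ) (h : ℤ → A) : Set (ℤ → A) :=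
  X ∩ {x | ∀ i ∈ s, x i = h i}

/-- A barrier on `X`: a partition of `X` all of whose members are nonempty cylinders in `X`. -/
def IsBarrier {A : Type*} (X : Set (ℤ → A)) (B : Set (Set (ℤ → A))) : Prop :=
  (∀ C ∈ B, C.Nonempty ∧ ∃ (s : Finset ℤ) (h : ℤ → A), C = cylX X s h) ∧
  (∀ x ∈ X, ∃! C, C ∈ B ∧ x ∈ C)

/-- `Ψ` is induced by the local rule `φ` on the barrier `B`:
`Ψ(x)_n = φ(C)` whenever `C ∈ B` contains `σ^n(x)`. -/
def InducedBy {A U : Type*} (X : Set (ℤ → A)) (Ψ : (ℤ → A) → ℤ → U)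
    (B : Set (Set (ℤ → A))) (φ : Set (ℤ → A) → U) : Prop :=
  ∀ x ∈ X, ∀ n : ℤ, ∀ C ∈ B, shiftIter n x ∈ C → Ψ x n = φ C

/-- `Ψ` is an extended sliding block code on `X`. -/
def IsESBC {A U : Type*} (X : Set (ℤ → A)) (Ψ : (ℤ → A) → ℤ → U) : Prop :=
  ∃ (B : Set (Set (ℤ → A))) (φ : Set (ℤ → A) → U), IsBarrier X B ∧ InducedBy X Ψ B φ

/-- `Ψ` is an extended sliding block code of finite degree: it is induced by a local rule `φ`
on a barrier `B` (so `B` is attached to `Ψ`) such that for each symbol `u` only finitely many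
members of `B` have `φ`-value (i.e. `Ψ₀`-value) `u`. -/
def IsFiniteDegreeESBC {A U : Type*} (X : Set (ℤ → A)) (Ψ : (ℤ → A) → ℤ → U) : Prop :=
  ∃ (B : Set (Set (ℤ → A))) (φ : Set (ℤ → A) → U), IsBarrier X B ∧ InducedBy X Ψ B φ ∧
    ∀ u : U, {C | C ∈ B ∧ φ C = u}.Finite

/-- The data produced by the crucial lemma for a distinguished sequence `x` with
`Ψ(x^k) → y`: a sequence of partial functions `h_ℓ` (with finite domains `s_ℓ`, each
extending the previous one) and a decreasing sequence `S_ℓ` of infinite subsets of `ℕ`,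
such that `x^k ∈ C_X(h_ℓ)` for `k ∈ S_ℓ` and `Ψ(z)|_{[-ℓ,ℓ]} = y|_{[-ℓ,ℓ]}` on `C_X(h_ℓ)`. -/
def AssocData {A U : Type*} (X : Set (ℤ → A)) (Ψ : (ℤ → A) → ℤ → U)
    (x : ℕ → ℤ → A) (y : ℤ → U)
    (s : ℕ → Finset ℤ) (h : ℕ → ℤ → A) (S : ℕ → Set ℕ) : Prop :=
  (∀ ℓ : ℕ, s ℓ ⊆ s (ℓ + 1)) ∧
  (∀ ℓ : ℕ, ∀ i ∈ s ℓ, h (ℓ + 1) i = h ℓ i) ∧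
  (∀ ℓ : ℕ, (S ℓ).Infinite) ∧
  (∀ ℓ : ℕ, S (ℓ + 1) ⊆ S ℓ) ∧
  (∀ ℓ : ℕ, ∀ k ∈ S ℓ, x k ∈ cylX X (s ℓ) (h ℓ)) ∧
  (∀ ℓ : ℕ, ∀ z ∈ cylX X (s ℓ) (h ℓ), ∀ j : ℤ, |j| ≤ (ℓ : ℤ) → Ψ z j = y j)

/-- The symbol `a` belongs to `L₁(X)`: it appears in some point of `X`. -/
def inLetter {A : Type*} (X : Set (ℤ → A)) (a : A) : Prop :=
  ∃ x ∈ X, ∃ i : ℤ, x i = a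

/-- The two-letter word `ab` belongs to the language `L(X)`. -/
def inLang2 {A : Type*} (X : Set (ℤ → A)) (a b : A) : Prop :=
  ∃ x ∈ X, ∃ i : ℤ, x i = a ∧ x (i + 1) = b

/-- `X` is right-finite: for each allowed symbol `a`, only finitely many `b` with `ab ∈ L(X)`. -/
def RightFinite {A : Type*} (X : Set (ℤ → A)) : Prop :=
  ∀ a : A, inLetter X a → {b : A | inLang2 X a b}.Finite

/-- `X` is left-finite: for each allowed symbol `a`, only finitely many `b` with `ba ∈ L(X)`. -/
def LeftFinite {A : Type*} (X : Set (ℤ → A)) : Prop :=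
  ∀ a : A, inLetter X a → {b : A | inLang2 X b a}.Finite

end ShiftPaper

open ShiftPaper

/-!
Since `Ψ` commutes with the shift, `Ψ(x)_n = Ψ(σⁿ x)_0`, so everything depends on the zeroth
coordinate of `Ψ`, which is locally constant on `X`. Two windows (sets of points of `X` agreeing
with a given one on `[-n, n]`) are nested or disjoint, like balls in an ultrametric space. Hence the
maximal windows on which the zeroth coordinate is constant are pairwise disjoint, and they cover `X`
because every point has a least radius of constancy.
-/

namespace ShiftPaper

section Windows

variable {A U : Type*} {X C D : Set (ℤ → A)} {x y : ℤ → A} {m n : ℕ}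

/-- The window of radius `n` around `x`: the cylinder in `X` of the points agreeing with `x` on
`[-n, n]`. These cylinders play the role of balls; the centre `x` need not lie in `X`. -/
def window (X : Set (ℤ → A)) (x : ℤ → A) (n : ℕ) : Set (ℤ → A) :=
  cylX X (Finset.Icc (-n) n) x

lemma mem_window_self (hx : x ∈ X) (n : ℕ) : x ∈ window X x n :=
  ⟨hx, fun _ _ => rfl⟩

lemma window_antitone (X : Set (ℤ → A)) (x : ℤ → A) : Antitone (window X x) :=
  fun _ _ hmn _ hz => ⟨hz.1, fun i hi =>
    hz.2 i (Finset.Icc_subset_Icc (by lia) (by lia) hi)⟩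

lemma window_eq_of_mem (hy : y ∈ window X x n) : window X y n = window X x n := by
  ext z
  exact and_congr_right fun _ => forall₂_congr fun i hi => by rw [hy.2 i hi]

lemma exists_window_subset [TopologicalSpace A] {t : Set (ℤ → A)} (ht : t ∈ 𝓝[X] x) :
    ∃ n, window X x n ⊆ t := by
  obtain ⟨O, hO, hxO, hOt⟩ := mem_nhdsWithin.1 ht
  obtain ⟨I, u, hu, hIu⟩ := isOpen_pi_iff.1 hO x hxO
  refine ⟨I.sup Int.natAbs, fun z hz => hOt ⟨hIu fun i hi => ?_, hz.1⟩⟩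
  have hi_le : i.natAbs ≤ I.sup Int.natAbs := Finset.le_sup hi
  have hzi : z i = x i := hz.2 i (Finset.mem_Icc.2 (by lia))
  exact hzi ▸ (hu i hi).2

/-- The windows, around points of `X`, on which `f` is constant. The members maximal under inclusion
form the barrier that induces a sliding block code. -/
def constWindows (X : Set (ℤ → A)) (f : (ℤ → A) → U) : Set (Set (ℤ → A)) :=
  {C | (∃ x ∈ X, ∃ n, window X x n = C) ∧ (f '' C).Subsingleton}

variable {f : (ℤ → A) → U}

lemma subset_or_subset_of_mem_constWindows (hC : C ∈ constWindows X f) (hD : D ∈ constWindows X f)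
    (hxC : x ∈ C) (hxD : x ∈ D) : C ⊆ D ∨ D ⊆ C := by
  obtain ⟨⟨y, -, m, rfl⟩, -⟩ := hC
  obtain ⟨⟨z, -, n, rfl⟩, -⟩ := hD
  rw [← window_eq_of_mem hxC, ← window_eq_of_mem hxD]
  exact (le_total n m).imp (window_antitone X x ·) (window_antitone X x ·)

lemma exists_subsingleton_image_window [TopologicalSpace A] [TopologicalSpace U]
    [DiscreteTopology U] (hf : ContinuousOn f X) (hx : x ∈ X) :
    ∃ n, (f '' window X x n).Subsingleton := by
  obtain ⟨n, hn⟩ := exists_window_subset (hf x hx (mem_nhds_discrete.2 (mem_singleton (f x))))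
  exact ⟨n, subsingleton_singleton.anti (image_subset_iff.2 hn)⟩

lemma exists_maximal_constWindow [TopologicalSpace A] [TopologicalSpace U] [DiscreteTopology U]
    (hf : ContinuousOn f X) (hx : x ∈ X) :
    ∃ C, Maximal (· ∈ constWindows X f) C ∧ x ∈ C := by
  classical
  have hconst := exists_subsingleton_image_window hf hx
  refine ⟨window X x (Nat.find hconst), ⟨⟨⟨x, hx, _, rfl⟩, Nat.find_spec hconst⟩, ?_⟩,
    mem_window_self hx _⟩
  rintro _ ⟨⟨y, -, n, rfl⟩, hn⟩ hsub
  have hxy : window X x n = window X y n := window_eq_of_mem (hsub (mem_window_self hx _))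
  rw [← hxy] at hn ⊢
  exact window_antitone X x (Nat.find_min' hconst hn)

lemma isBarrier_maximal_constWindows [TopologicalSpace A] [TopologicalSpace U] [DiscreteTopology U]
    (hf : ContinuousOn f X) : IsBarrier X {C | Maximal (· ∈ constWindows X f) C} := by
  refine ⟨?_, fun x hx => existsUnique_of_exists_of_unique (exists_maximal_constWindow hf hx) ?_⟩
  · rintro _ ⟨⟨⟨x, hx, n, rfl⟩, -⟩, -⟩
    exact ⟨⟨x, mem_window_self hx n⟩, _, _, rfl⟩
  · rintro C D ⟨hC, hxC⟩ ⟨hD, hxD⟩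
    rcases subset_or_subset_of_mem_constWindows hC.prop hD.prop hxC hxD with hCD | hDC
    · exact hC.eq_of_subset hD.prop hCD
    · exact hD.eq_of_superset hC.prop hDC

lemma exists_isBarrier_eqOn_const [TopologicalSpace A] [TopologicalSpace U] [DiscreteTopology U]
    [Nonempty U] (hf : ContinuousOn f X) :
    ∃ (B : Set (Set (ℤ → A))) (φ : Set (ℤ → A) → U),
      IsBarrier X B ∧ ∀ C ∈ B, EqOn f (fun _ => φ C) C := by
  have hvalue : ∀ C ∈ {C | Maximal (· ∈ constWindows X f) C}, ∃ u, EqOn f (fun _ => u) C := by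
    rintro _ ⟨⟨⟨x, hx, n, rfl⟩, hsub⟩, -⟩
    exact ⟨f x, fun y hy =>
      hsub (mem_image_of_mem f hy) (mem_image_of_mem f (mem_window_self hx n))⟩
  choose! φ hφ using hvalue
  exact ⟨_, φ, isBarrier_maximal_constWindows hf, hφ⟩

end Windows

section Shift

variable {A U : Type*} {X : Set (ℤ → A)} {Ψ : (ℤ → A) → ℤ → U} {x : ℤ → A}

lemma shiftIter_zero (x : ℤ → A) : shiftIter 0 x = x :=
  funext fun m => congrArg x (add_zero m)

lemma shiftIter_shiftIter (m n : ℤ) (x : ℤ → A) :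
    shiftIter m (shiftIter n x) = shiftIter (m + n) x :=
  funext fun k => congrArg x (add_assoc k m n)

lemma shiftIter_natCast_succ (k : ℕ) (x : ℤ → A) :
    shiftIter (k + 1 : ℕ) x = shiftIter k (shiftMap x) := by
  rw [Nat.cast_succ]
  exact (shiftIter_shiftIter k 1 x).symm

lemma map_shiftIter_natCast (hX : MapsTo shiftMap X X)
    (hcomm : ∀ x ∈ X, Ψ (shiftMap x) = shiftMap (Ψ x)) (k : ℕ) (hx : x ∈ X) :
    Ψ (shiftIter k x) = shiftIter k (Ψ x) := by
  induction k generalizing x with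
  | zero => simp only [Nat.cast_zero, shiftIter_zero]
  | succ k ih => rw [shiftIter_natCast_succ, ih (hX hx), hcomm x hx, ← shiftIter_natCast_succ]

lemma map_shiftIter (hX : MapsTo shiftMap X X)
    (hcomm : ∀ x ∈ X, Ψ (shiftMap x) = shiftMap (Ψ x)) (n : ℤ) (hx : x ∈ X)
    (hnx : shiftIter n x ∈ X) : Ψ (shiftIter n x) = shiftIter n (Ψ x) := by
  obtain ⟨k, rfl | rfl⟩ := n.eq_nat_or_neg
  · exact map_shiftIter_natCast hX hcomm k hx
  · have hΨ := map_shiftIter_natCast hX hcomm k hnx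
    rw [shiftIter_shiftIter, add_neg_cancel, shiftIter_zero] at hΨ
    rw [hΨ, shiftIter_shiftIter, neg_add_cancel, shiftIter_zero]

end Shift

end ShiftPaper

/-- For `n < 0` the point `σⁿ x` may leave `X`; the local rule then imposes nothing on `Ψ(x)_n`. -/
theorem continuous_shift_commuting_is_esbc_general {A U : Type*} [TopologicalSpace A]
    [TopologicalSpace U] [DiscreteTopology U] [Nonempty U] {X : Set (ℤ → A)}
    (hX : MapsTo shiftMap X X) {Ψ : (ℤ → A) → ℤ → U} (hcont : ContinuousOn (fun x => Ψ x 0) X)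
    (hcomm : ∀ x ∈ X, Ψ (shiftMap x) = shiftMap (Ψ x)) : IsESBC X Ψ := by
  obtain ⟨B, φ, hB, hφ⟩ := exists_isBarrier_eqOn_const hcont
  refine ⟨B, φ, hB, fun x hx n C hC hxC => ?_⟩
  have hnx : shiftIter n x ∈ X := by
    obtain ⟨-, s, h, rfl⟩ := hB.1 C hC
    exact hxC.1
  calc Ψ x n = shiftIter n (Ψ x) 0 := congrArg (Ψ x) (zero_add n).symm
    _ = Ψ (shiftIter n x) 0 := by rw [map_shiftIter hX hcomm n hx hnx]
    _ = φ C := hφ C hC hxC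

/-- extended Curtis–Hedlund–Lyndon theorem: every continuous and
shift-commuting map on a shift space over a discrete alphabet is an extended sliding
block code: it is induced by a local rule on some barrier. -/
theorem continuous_shift_commuting_is_esbc
    {A U : Type*} [TopologicalSpace A] [DiscreteTopology A] [Nonempty A]
    [TopologicalSpace U] [DiscreteTopology U] [Nonempty U]
    (X : Set (ℤ → A)) (hX : IsShiftSpace X)
    (Ψ : (ℤ → A) → ℤ → U)
    (hcont : ContinuousOn Ψ X)
    (hcomm : ∀ x ∈ X, Ψ (shiftMap x) = shiftMap (Ψ x)) :
    ∃ (B : Set (Set (ℤ → A))) (φ : Set (ℤ → A) → U),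
      IsBarrier X B ∧ InducedBy X Ψ B φ :=
  continuous_shift_commuting_is_esbc_general (mapsTo_iff_image_subset.2 hX.2.2.subset)
    ((continuous_apply 0).comp_continuousOn hcont) hcomm
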